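/- For all t ∈ ℝ, h > 0 and u₁, u₂ ∈ 𝒮(ℝ^d): (e^{ithA}u₁, P u₂) - (P u₁, e^{-ithA} u₂) = h ∫₀^t ( e^{ithA} P_{sh} u₁, u₂ ) ds. Moreover, for each pair u₁, u₂ there is a constant C such that |(e^{ithA}u₁, P u₂) - (P u₁, e^{-ithA} u₂)| ≤ C |t| e^{h|t|} for all t ∈ ℝ. -/

import Mathlib

open MeasureTheory Filter Topology Complex
open scoped Real ENNReal FourierTransform ComplexConjugate

noncomputable section

/-- Euclidean space `ℝ^d`. -/
abbrev Ed (d : ℕ) : Type := EuclideanSpace ℝ (Fin d)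

/-- `L²(ℝ^d)` with complex values. -/
abbrev L2 (d : ℕ) := MeasureTheory.Lp ℂ 2 (volume : Measure (Ed d))

/-- The partial derivative `∂_j u`. -/
def pd (d : ℕ) (j : Fin d) (u : Ed d → ℂ) : Ed d → ℂ :=
  fun x => fderiv ℝ u x (EuclideanSpace.single j (1:ℝ))

/-- The operator `∑_{j,k} D_j (b_{jk} D_k) = - ∑_{j,k} ∂_j (b_{jk} ∂_k)` (complex
coefficients), applied to a function `u`. -/
def divGradC (d : ℕ) (b : Ed d → Fin d → Fin d → ℂ) (u : Ed d → ℂ) : Ed d → ℂ :=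
  fun x => -∑ j : Fin d, ∑ k : Fin d,
    fderiv ℝ (fun y => b y j k * fderiv ℝ u y (EuclideanSpace.single k (1:ℝ))) x
      (EuclideanSpace.single j (1:ℝ))

/-- `- div (G ∇ u) = ∑_{j,k} D_j (G_{jk} D_k) u` for a real coefficient matrix `G`. -/
def divGrad (d : ℕ) (G : Ed d → Fin d → Fin d → ℝ) (u : Ed d → ℂ) : Ed d → ℂ :=
  divGradC d (fun x j k => (G x j k : ℂ)) u

/-- The operation `a ↦ x·∇a` on real valued functions. -/
def xdotOp (d : ℕ) : (Ed d → ℝ) → Ed d → ℝ := fun a x => fderiv ℝ a x x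

/-- The operation `a ↦ x·∇a` on complex valued functions. -/
def xdotC (d : ℕ) : (Ed d → ℂ) → Ed d → ℂ := fun a x => fderiv ℝ a x x

/-- `a ∈ C_b^∞(ℝ^d)`: smooth with all derivatives bounded. -/
def CbSmooth (d : ℕ) (a : Ed d → ℝ) : Prop :=
  ContDiff ℝ (⊤ : ℕ∞) a ∧ ∀ n : ℕ, ∃ C : ℝ, ∀ x, ‖iteratedFDeriv ℝ n a x‖ ≤ C

/-- `a ∈ S_dil(ℝ^d)` : `a ∈ C_b^∞` and `(x·∇)^n a ∈ L^∞` for all `n`. -/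
def MemSdil (d : ℕ) (a : Ed d → ℝ) : Prop :=
  CbSmooth d a ∧ ∀ n : ℕ, ∃ C : ℝ, ∀ x, |(xdotOp d)^[n] a x| ≤ C

/-- Complex-valued version of `S_dil(ℝ^d)`. -/
def MemSdilC (d : ℕ) (a : Ed d → ℂ) : Prop :=
  (ContDiff ℝ (⊤ : ℕ∞) a ∧ ∀ n : ℕ, ∃ C : ℝ, ∀ x, ‖iteratedFDeriv ℝ n a x‖ ≤ C) ∧
  ∀ n : ℕ, ∃ C : ℝ, ∀ x, ‖(xdotC d)^[n] a x‖ ≤ C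

/-- The coefficient matrix is symmetric with real entries. -/
def SymmetricCoef (d : ℕ) (G : Ed d → Fin d → Fin d → ℝ) : Prop := ∀ x j k, G x j k = G x k j

/-- Uniform ellipticity: `Λ₊ ≥ G(x) ≥ Λ₋ > 0` as quadratic forms. -/
def UniformlyElliptic (d : ℕ) (G : Ed d → Fin d → Fin d → ℝ) : Prop :=
  ∃ lam Lam : ℝ, 0 < lam ∧ ∀ (x : Ed d) (v : Fin d → ℝ),
    lam * ∑ j, v j ^ 2 ≤ (∑ j, ∑ k, G x j k * v j * v k) ∧
      (∑ j, ∑ k, G x j k * v j * v k) ≤ Lam * ∑ j, v j ^ 2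

/-- The standing assumptions of the paper: `G` symmetric with entries in `C_b^∞`,
uniformly elliptic. -/
def Standing (d : ℕ) (G : Ed d → Fin d → Fin d → ℝ) : Prop :=
  (∀ j k, CbSmooth d fun x => G x j k) ∧ SymmetricCoef d G ∧ UniformlyElliptic d G

/-- `G = I_d + H`. -/
def Gmat (d : ℕ) (H : Ed d → Fin d → Fin d → ℝ) : Ed d → Fin d → Fin d → ℝ :=
  fun x j k => (if j = k then 1 else 0) + H x j k

/-- Long range condition `|∂^α (G - I_d)| ≤ C_α ⟨x⟩^{-μ-|α|}`. -/
def LongRange (d : ℕ) (G : Ed d → Fin d → Fin d → ℝ) (μ : ℝ) : Prop :=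
  ∀ (j k : Fin d) (n : ℕ), ∃ C : ℝ, ∀ x : Ed d,
    ‖iteratedFDeriv ℝ n (fun y => G y j k - if j = k then (1:ℝ) else 0) x‖
      ≤ C * ((1 + ‖x‖ ^ 2) ^ (-(μ + n) / 2) : ℝ)

/-- `R` is the resolvent `(P - z)⁻¹` of the self-adjoint realization of
`P = - div (G ∇·)`: for every `f ∈ L²`, `g = R f` solves `(P - z) g = f` in the sense
of distributions (this characterizes the resolvent uniquely). -/
def IsWeakResolvent (d : ℕ) (G : Ed d → Fin d → Fin d → ℝ) (z : ℂ)
    (R : L2 d →L[ℂ] L2 d) : Prop :=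
  ∀ (f : L2 d) (φ : SchwartzMap (Ed d) ℂ),
    (∫ x, (R f) x * divGrad d G (⇑φ) x) - z * (∫ x, (R f) x * φ x) = ∫ x, f x * φ x

/-- The japanese bracket weight `⟨x⟩^s = (1+|x|²)^{s/2}`. -/
def jweight (d : ℕ) (s : ℝ) : Ed d → ℝ := fun x => (1 + ‖x‖ ^ 2) ^ (s / 2)

/-- The dilation group `(e^{itA} u)(x) = e^{td/2} u(e^t x)`, where
`A = (x·∇ + ∇·x)/(2i)` is the generator of dilations. -/
def dil (d : ℕ) (t : ℝ) (u : Ed d → ℂ) : Ed d → ℂ :=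
  fun x => (Real.exp (t * d / 2) : ℂ) * u (Real.exp t • x)

/-- The `L²` inner product of two functions (conjugate linear in the first variable,
as is Mathlib's convention). -/
def pairL2 (d : ℕ) (u v : Ed d → ℂ) : ℂ := ∫ x : Ed d, (starRingEnd ℂ) (u x) * v x

/-- The resolvent `(hA - z)⁻¹ = (1/i) ∫₀^{±∞} e^{-itz} e^{ithA} dt` (`± Im z < 0`) of the
(rescaled) generator of dilations, realized by its defining integral formula. -/
def resDil (d : ℕ) (h : ℝ) (z : ℂ) (u : Ed d → ℂ) : Ed d → ℂ := fun x =>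
  if z.im < 0 then
    Complex.I⁻¹ * ∫ t in Set.Ici (0:ℝ), Complex.exp (-(Complex.I * t * z)) * dil d (t * h) u x
  else
    -Complex.I⁻¹ * ∫ t in Set.Iic (0:ℝ), Complex.exp (-(Complex.I * t * z)) * dil d (t * h) u x

/-- `sin(τ A) u = (e^{iτA} - e^{-iτA}) u / (2i)`. -/
def sinA (d : ℕ) (τ : ℝ) (u : Ed d → ℂ) : Ed d → ℂ :=
  fun x => (dil d τ u x - dil d (-τ) u x) / (2 * Complex.I)

/-- `F(hA) = arctan(hA)` realized through `arctan λ = ∫₀^∞ sin(tλ) e^{-t} dt / t`. -/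
def arctanA (d : ℕ) (h : ℝ) (u : Ed d → ℂ) : Ed d → ℂ :=
  fun x => ∫ t in Set.Ioi (0:ℝ), ((Real.exp (-t) / t : ℝ) : ℂ) * sinA d (t * h) u x

/-- Coefficients of the commutator `i[P,A] = ∑ D_j (2G_{jk} - x·∇G_{jk}) D_k`. -/
def commCoef (d : ℕ) (G : Ed d → Fin d → Fin d → ℝ) : Ed d → Fin d → Fin d → ℝ :=
  fun x j k => 2 * G x j k - xdotOp d (fun y => G y j k) x

/-- `P_τ = e^{-iτA} (i[P,A]) e^{iτA}` applied to a function. -/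
def ptauFun (d : ℕ) (G : Ed d → Fin d → Fin d → ℝ) (τ : ℝ) (u : Ed d → ℂ) : Ed d → ℂ :=
  dil d (-τ) (divGrad d (commCoef d G) (dil d τ u))

/-- Coefficients of `P_τ = e^{-iτA} (i[P,A]) e^{iτA}` for `P = -div((I+H)∇)`;
indeed `e^{-iτA} (∑ D_j b D_k) e^{iτA} = e^{2τ} ∑ D_j b(e^{-τ}x) D_k`. -/
def ptauCoef (d : ℕ) (H : Ed d → Fin d → Fin d → ℝ) (τ : ℝ) : Ed d → Fin d → Fin d → ℝ :=
  fun x j k => Real.exp (2 * τ) * commCoef d (Gmat d H) (Real.exp (-τ) • x) j k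

/-- Coefficients of `Q_s = ∫₀¹ (d P_τ / dτ)|_{τ=σs} dσ`. -/
def qCoef (d : ℕ) (H : Ed d → Fin d → Fin d → ℝ) (s : ℝ) : Ed d → Fin d → Fin d → ℝ :=
  fun x j k => ∫ σ in (0:ℝ)..(1:ℝ), deriv (fun τ => ptauCoef d H τ x j k) (σ * s)

/-- Coefficients of `B_τ = τ ∫₀¹ s Q_{sτ} ds`. -/
def bCoef (d : ℕ) (H : Ed d → Fin d → Fin d → ℝ) (τ : ℝ) : Ed d → Fin d → Fin d → ℝ :=
  fun x j k => τ * ∫ s in (0:ℝ)..(1:ℝ), s * qCoef d H (s * τ) x j k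

/-- The Fourier multiplier `|D|` (with symbol `|ξ|`). -/
def absD (d : ℕ) (u : Ed d → ℂ) : Ed d → ℂ :=
  fun x => 𝓕⁻ (fun ξ : Ed d => (‖ξ‖ : ℂ) * 𝓕 u ξ) x

/-- `‖ |D| w ‖_{L²}`, computed on the Fourier side (Plancherel). -/
def Dnorm (d : ℕ) (w : Ed d → ℂ) : ℝ :=
  (eLpNorm (fun ξ : Ed d => (‖ξ‖ : ℂ) * 𝓕 w ξ) 2 volume).toReal

/-- A general Fourier multiplier `ρ(D)`. -/
def multD (d : ℕ) (ρ : Ed d → ℂ) (u : Ed d → ℂ) : Ed d → ℂ :=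
  fun x => 𝓕⁻ (fun ξ : Ed d => ρ ξ * 𝓕 u ξ) x

/-- The operator `A = (x·∇ + ∇·x)/(2i) = (x·∇ + d/2)/i` applied to a function. -/
def opA (d : ℕ) (u : Ed d → ℂ) : Ed d → ℂ :=
  fun x => (fderiv ℝ u x x + (d / 2 : ℂ) * u x) / Complex.I

/-- The functions `F_ν(λ) = ∫₀^∞ sin(tλ) t/(t²+ν²) e^{-t} dt` approximating `arctan`. -/
def Fnu (ν lam : ℝ) : ℝ :=
  ∫ t in Set.Ioi (0:ℝ), Real.sin (t * lam) * (t / (t ^ 2 + ν ^ 2)) * Real.exp (-t)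

/-- `m`-admissible family in `S_dil(ℝ^d)`:
`‖∂_τ^k (x·∇)^n b_τ‖_{L^∞} ≤ C_{kn} e^{m|τ|}` for all `k, n`. -/
def AdmissibleCoeff (d : ℕ) (m : ℕ) (b : ℝ → Ed d → ℂ) : Prop :=
  (∀ τ, MemSdilC d (b τ)) ∧
  (∀ (n : ℕ) (x : Ed d), ContDiff ℝ (⊤ : ℕ∞) fun τ => (xdotC d)^[n] (b τ) x) ∧
  ∀ k n : ℕ, ∃ C : ℝ, ∀ (τ : ℝ) (x : Ed d),
    ‖iteratedDeriv k (fun σ => (xdotC d)^[n] (b σ) x) τ‖ ≤ C * Real.exp (m * |τ|)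

/-- `m`-admissible family of differential operators `B_τ = ∑ D_j b_{jk,τ} D_k`. -/
def AdmissibleOp (d : ℕ) (m : ℕ) (B : ℝ → Ed d → Fin d → Fin d → ℂ) : Prop :=
  ∀ j k, AdmissibleCoeff d m fun τ x => B τ x j k

/-- Functions that are continuous and bounded on `[0,∞)` (the spectrum of `P`). -/
def GoodSymbol (φ : ℝ → ℂ) : Prop :=
  Continuous φ ∧ ∃ C : ℝ, ∀ lam : ℝ, 0 ≤ lam → ‖φ lam‖ ≤ C

/-- The (continuous bounded) functional calculus `φ ↦ φ(P)` of the nonnegative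
self-adjoint operator `P = -div(G∇)`, characterized by: it is linear and
multiplicative on continuous functions bounded on `[0,∞) ⊇ spec(P)`, compatible with
sup-norm bounds and adjoints, only depends on the restriction of the symbol to
`[0,∞)`, and sends `λ ↦ (λ - z)⁻¹` to the resolvent `(P - z)⁻¹`.  These properties
determine `φ(P)` uniquely for every `φ` continuous and vanishing at infinity.
Moreover `0` is not an eigenvalue of `P` (field `ker_triv`). -/
structure SpectralCalc (d : ℕ) (G : Ed d → Fin d → Fin d → ℝ) where
  map : (ℝ → ℂ) → (L2 d →L[ℂ] L2 d)
  map_congr : ∀ φ ψ, GoodSymbol φ → GoodSymbol ψ →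
    (∀ lam : ℝ, 0 ≤ lam → φ lam = ψ lam) → map φ = map ψ
  map_add : ∀ φ ψ, GoodSymbol φ → GoodSymbol ψ →
    map (fun lam => φ lam + ψ lam) = map φ + map ψ
  map_smul : ∀ (c : ℂ) φ, GoodSymbol φ → map (fun lam => c * φ lam) = c • map φ
  map_mul : ∀ φ ψ, GoodSymbol φ → GoodSymbol ψ →
    map (fun lam => φ lam * ψ lam) = (map φ).comp (map ψ)
  map_norm : ∀ (φ) (C : ℝ), (∀ lam : ℝ, 0 ≤ lam → ‖φ lam‖ ≤ C) → ‖map φ‖ ≤ C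
  map_star : ∀ φ, GoodSymbol φ →
    ContinuousLinearMap.adjoint (map φ) = map (fun lam => (starRingEnd ℂ) (φ lam))
  map_resolvent : ∀ z : ℂ, z.im ≠ 0 →
    IsWeakResolvent d G z (map fun lam => ((lam : ℂ) - z)⁻¹)
  ker_triv : ∀ f : L2 d,
    (∀ φ : SchwartzMap (Ed d) ℂ, (∫ x, f x * divGrad d G (⇑φ) x) = 0) → f = 0

/-- `Rj = ∂_j P^{-1/2}` is the `j`-th Riesz transform of `P`, defined as the strong
limit `s-lim_n π^{-1/2} ∂_j ∫_{1/n}^n e^{-tP} dt/√t`; here `gn n` is the vector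
integral `∫_{1/n}^n e^{-tP} f dt/√t` and `wn n` is its distributional `∂_j`
derivative. -/
def RieszOf (d : ℕ) (G : Ed d → Fin d → Fin d → ℝ) (S : SpectralCalc d G) (j : Fin d)
    (Rj : L2 d →L[ℂ] L2 d) : Prop :=
  ∀ (f : L2 d) (gn wn : ℕ → L2 d),
    (∀ n : ℕ, gn n = ∫ t in Set.Icc ((n : ℝ)⁻¹) (n : ℝ),
        ((Real.sqrt t)⁻¹ : ℝ) • (S.map (fun lam => Complex.exp (-(t : ℂ) * ((max lam 0 : ℝ) : ℂ))) f)) →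
    (∀ (n : ℕ) (φ : SchwartzMap (Ed d) ℂ),
        (∫ x, (wn n) x * φ x) = -∫ x, (gn n) x * pd d j (⇑φ) x) →
    Tendsto (fun n : ℕ => ((Real.sqrt Real.pi)⁻¹ : ℝ) • wn n) atTop (𝓝 (Rj f))

section Helpers

open scoped LineDeriv

/-- The real bilinear map `(a, b) ↦ conj a * b`. -/
def conjMul : ℂ →L[ℝ] ℂ →L[ℝ] ℂ :=
  (ContinuousLinearMap.mul ℝ ℂ).comp (Complex.conjCLE : ℂ →L[ℝ] ℂ)

lemma conjMul_apply (a b : ℂ) : conjMul a b = (starRingEnd ℂ) a * b := by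
  simp [conjMul]

/-- multiplication of a Schwartz function by a temperate real function. -/
def mulS {d : ℕ} {b : Ed d → ℝ} (hb : b.HasTemperateGrowth) (f : SchwartzMap (Ed d) ℂ) :
    SchwartzMap (Ed d) ℂ :=
  SchwartzMap.bilinLeftCLM (ContinuousLinearMap.lsmul ℝ ℝ (E := ℂ)).flip hb f

lemma mulS_apply {d : ℕ} {b : Ed d → ℝ} (hb : b.HasTemperateGrowth)
    (f : SchwartzMap (Ed d) ℂ) (x : Ed d) : mulS hb f x = (b x : ℂ) * f x := by
  simp [mulS, SchwartzMap.bilinLeftCLM_apply]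

/-- the dilation of a Schwartz function -/
def dilS {d : ℕ} (T : ℝ) (u : SchwartzMap (Ed d) ℂ) : SchwartzMap (Ed d) ℂ :=
  (Real.exp (T * d / 2) : ℂ) • SchwartzMap.compCLMOfContinuousLinearEquiv ℂ
    (ContinuousLinearEquiv.smulLeft (Units.mk0 (Real.exp T) (Real.exp_ne_zero T))) u

lemma dilS_apply {d : ℕ} (T : ℝ) (u : SchwartzMap (Ed d) ℂ) (x : Ed d) :
    dilS T u x = (Real.exp (T * d / 2) : ℂ) * u (Real.exp T • x) := by
  simp [dilS]

lemma coe_dilS {d : ℕ} (T : ℝ) (u : SchwartzMap (Ed d) ℂ) : ⇑(dilS T u) = dil d T ⇑u := by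
  funext x; exact dilS_apply T u x

lemma lineDeriv_dilS {d : ℕ} (T : ℝ) (u : SchwartzMap (Ed d) ℂ) (m : Ed d) (x : Ed d) :
    (∂_{m} (dilS T u) : SchwartzMap (Ed d) ℂ) x = (Real.exp T : ℂ) * dilS T (∂_{m} u) x := by
  rw [dilS_apply, SchwartzMap.lineDerivOp_apply_eq_fderiv, SchwartzMap.lineDerivOp_apply_eq_fderiv,
    coe_dilS]
  have h1 : HasFDerivAt (dil d T ⇑u) ((Real.exp (T * d / 2) : ℂ) •
      ((fderiv ℝ u (Real.exp T • x)).comp (Real.exp T • ContinuousLinearMap.id ℝ (Ed d)))) x := by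
    have h2 : HasFDerivAt (fun y : Ed d => Real.exp T • y)
      (Real.exp T • ContinuousLinearMap.id ℝ (Ed d)) x := 
        (Real.exp T • ContinuousLinearMap.id ℝ (Ed d)).hasFDerivAt
    exact ((u.differentiableAt (x := Real.exp T • x)).hasFDerivAt.comp x h2).const_mul _
  rw [h1.fderiv]
  simp
  ring

lemma mulS_pd {d : ℕ} {b : Ed d → ℝ} (hb : b.HasTemperateGrowth)
    (f : SchwartzMap (Ed d) ℂ) (j k : Fin d) (x : Ed d) :
    fderiv ℝ (fun y => (b y : ℂ) * fderiv ℝ f y (EuclideanSpace.single k (1:ℝ))) x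
      (EuclideanSpace.single j (1:ℝ)) =
    (∂_{(EuclideanSpace.single j (1:ℝ) : Ed d)}
      (mulS hb (∂_{(EuclideanSpace.single k (1:ℝ) : Ed d)} f)) : SchwartzMap (Ed d) ℂ) x := by
  rw [SchwartzMap.lineDerivOp_apply_eq_fderiv]
  congr 2

lemma conjMul_integrable {d : ℕ} (f g : SchwartzMap (Ed d) ℂ) :
    Integrable (fun x => (starRingEnd ℂ) (f x) * g x) := by
  have := (SchwartzMap.bilinLeftCLM conjMul g.hasTemperateGrowth f).integrable (μ := volume)
  refine this.congr (Eventually.of_forall fun x => ?_)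
  simp [SchwartzMap.bilinLeftCLM_apply, conjMul_apply]

lemma ibp_left {d : ℕ} {b : Ed d → Fin d → Fin d → ℝ}
    (hb : ∀ j k, (fun x => b x j k).HasTemperateGrowth) (f g : SchwartzMap (Ed d) ℂ) :
    pairL2 d (divGrad d b f) g = ∑ j : Fin d, ∑ k : Fin d,
      ∫ x, (b x j k : ℂ) * ((starRingEnd ℂ)
        ((∂_{(EuclideanSpace.single k (1:ℝ) : Ed d)} f : SchwartzMap (Ed d) ℂ) x) *
        (∂_{(EuclideanSpace.single j (1:ℝ) : Ed d)} g : SchwartzMap (Ed d) ℂ) x) := by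
  unfold pairL2 divGrad divGradC
  simp only [mulS_pd (hb _ _), map_neg, map_sum, Finset.sum_mul, neg_mul]
  rw [integral_neg, integral_finsetSum _ (fun j _ => integrable_finsetSum _ fun k _ =>
    conjMul_integrable _ _), ← Finset.sum_neg_distrib]
  refine Finset.sum_congr rfl fun j _ => ?_
  rw [integral_finsetSum _ (fun k _ => conjMul_integrable _ _), ← Finset.sum_neg_distrib]
  refine Finset.sum_congr rfl fun k _ => ?_
  have := SchwartzMap.integral_bilinear_lineDerivOp_right_eq_neg_left (μ := volume)
    (mulS (hb j k) (∂_{(EuclideanSpace.single k (1:ℝ) : Ed d)} f)) g conjMul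
    (EuclideanSpace.single j (1:ℝ))
  simp only [conjMul_apply] at this
  rw [← this]
  congr 1
  funext x
  rw [mulS_apply, map_mul, Complex.conj_ofReal, mul_assoc]

lemma ibp_right {d : ℕ} {b : Ed d → Fin d → Fin d → ℝ}
    (hb : ∀ j k, (fun x => b x j k).HasTemperateGrowth) (f g : SchwartzMap (Ed d) ℂ) :
    pairL2 d f (divGrad d b g) = ∑ j : Fin d, ∑ k : Fin d,
      ∫ x, (b x j k : ℂ) * ((starRingEnd ℂ)
        ((∂_{(EuclideanSpace.single j (1:ℝ) : Ed d)} f : SchwartzMap (Ed d) ℂ) x) *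
        (∂_{(EuclideanSpace.single k (1:ℝ) : Ed d)} g : SchwartzMap (Ed d) ℂ) x) := by
  unfold pairL2 divGrad divGradC
  simp only [mulS_pd (hb _ _), Finset.mul_sum, mul_neg]
  rw [integral_neg, integral_finsetSum _ (fun j _ => integrable_finsetSum _ fun k _ =>
    conjMul_integrable _ _), ← Finset.sum_neg_distrib]
  refine Finset.sum_congr rfl fun j _ => ?_
  rw [integral_finsetSum _ (fun k _ => conjMul_integrable _ _), ← Finset.sum_neg_distrib]
  refine Finset.sum_congr rfl fun k _ => ?_
  have := SchwartzMap.integral_bilinear_lineDerivOp_right_eq_neg_left (μ := volume)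
    f (mulS (hb j k) (∂_{(EuclideanSpace.single k (1:ℝ) : Ed d)} g)) conjMul
    (EuclideanSpace.single j (1:ℝ))
  simp only [conjMul_apply] at this
  rw [this, neg_neg]
  congr 1
  funext x
  rw [mulS_apply]
  ring

lemma pair_symm {d : ℕ} {b : Ed d → Fin d → Fin d → ℝ}
    (hb : ∀ j k, (fun x => b x j k).HasTemperateGrowth) (hs : SymmetricCoef d b)
    (f g : SchwartzMap (Ed d) ℂ) :
    pairL2 d f (divGrad d b g) = pairL2 d (divGrad d b f) g := by
  rw [ibp_left hb, ibp_right hb, Finset.sum_comm]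
  refine Finset.sum_congr rfl fun j _ => Finset.sum_congr rfl fun k _ => ?_
  simp only [hs _ k j]

/-- change of variables -/
lemma integral_dil (d : ℕ) (s : ℝ) (F : Ed d → ℂ) :
    ∫ x, F x = (Real.exp (s * d) : ℂ) * ∫ y, F (Real.exp s • y) := by
  rw [Measure.integral_comp_smul_of_nonneg volume F (Real.exp s) (hR := (Real.exp_pos s).le)]
  simp only [finrank_euclideanSpace, Fintype.card_fin, Complex.real_smul]
  rw [← mul_assoc]
  have : Real.exp (s * d) * (Real.exp s ^ d)⁻¹ = 1 := by
    rw [← Real.exp_nat_mul, mul_comm s, mul_inv_cancel₀ (Real.exp_ne_zero _)]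
  rw [← Complex.ofReal_mul, this]
  simp

lemma pair_dil (d : ℕ) (s : ℝ) (f g : Ed d → ℂ) :
    pairL2 d (dil d s f) g = pairL2 d f (dil d (-s) g) := by
  unfold pairL2
  rw [integral_dil d s (fun x => (starRingEnd ℂ) (f x) * dil d (-s) g x), ← integral_const_mul]
  congr 1
  funext x
  simp only [dil, map_mul, Complex.conj_ofReal, smul_smul, ← Real.exp_add]
  have : (Real.exp (s * d) : ℂ) * (Real.exp (-s * d / 2) : ℂ) = (Real.exp (s * d / 2) : ℂ) := by
    rw [← Complex.ofReal_mul, ← Real.exp_add]; congr 2; ring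
  rw [← this]
  simp
  ring

lemma dil_dil (d : ℕ) (s t : ℝ) (f : Ed d → ℂ) : dil d s (dil d t f) = dil d (s + t) f := by
  funext x
  simp only [dil, smul_smul, ← mul_assoc, ← Real.exp_add, ← Complex.ofReal_mul]
  congr 4 <;> ring

lemma dil_zero (d : ℕ) (f : Ed d → ℂ) : dil d 0 f = f := by
  funext x; simp [dil]

/-- The key formula: all forms written with a common Schwartz weight. -/
lemma form_eq {d : ℕ} {b : Ed d → Fin d → Fin d → ℝ}
    (hb : ∀ j k, (fun x => b x j k).HasTemperateGrowth) (u₁ u₂ : SchwartzMap (Ed d) ℂ)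
    (T σ : ℝ) :
    pairL2 d (divGrad d b (dil d σ u₁)) (dil d (σ - T) u₂) = ∑ j : Fin d, ∑ k : Fin d,
      ∫ y, ((Real.exp (2 * σ - T) * b (Real.exp (T - σ) • y) j k : ℝ) : ℂ) * ((starRingEnd ℂ)
        (dilS T (∂_{(EuclideanSpace.single k (1:ℝ) : Ed d)} u₁ : SchwartzMap (Ed d) ℂ) y) *
        (∂_{(EuclideanSpace.single j (1:ℝ) : Ed d)} u₂ : SchwartzMap (Ed d) ℂ) y) := by
  rw [← coe_dilS, ← coe_dilS, ibp_left hb]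
  refine Finset.sum_congr rfl fun j _ => Finset.sum_congr rfl fun k _ => ?_
  rw [integral_dil d (T - σ), ← integral_const_mul]
  congr 1
  funext y
  simp only [lineDeriv_dilS, dilS_apply, map_mul, Complex.conj_ofReal, smul_smul, ← Real.exp_add]
  have e1 : σ + (T - σ) = T := by ring
  have e2 : σ - T + (T - σ) = 0 := by ring
  rw [e1, e2, Real.exp_zero, one_smul]
  have : (Real.exp (2 * σ - T) * Real.exp (T * d / 2) : ℝ) =
    Real.exp ((T - σ) * d) * (Real.exp σ * Real.exp (σ * d / 2)) *
      (Real.exp (σ - T) * Real.exp ((σ - T) * d / 2)) := by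
    simp only [← Real.exp_add]; congr 1; ring
  have this' := congrArg (fun r : ℝ => (r : ℂ)) this
  simp only [Complex.ofReal_mul] at this' ⊢
  linear_combination (-(b (Real.exp (T - σ) • y) j k : ℂ) * (starRingEnd ℂ)
    ((∂_{(EuclideanSpace.single k (1:ℝ) : Ed d)} u₁ : SchwartzMap (Ed d) ℂ) (Real.exp T • y)) *
    (∂_{(EuclideanSpace.single j (1:ℝ) : Ed d)} u₂ : SchwartzMap (Ed d) ℂ) y) * this'

lemma temperate_of_cb {d : ℕ} {a : Ed d → ℝ} (ha : CbSmooth d a) : a.HasTemperateGrowth :=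
  ⟨ha.1, fun n => ⟨0, (ha.2 n).imp fun C hC x => by simpa using hC x⟩⟩

lemma temperate_comm {d : ℕ} {a : Ed d → ℝ} (ha : CbSmooth d a) :
    (fun x => 2 * a x - xdotOp d a x).HasTemperateGrowth := by
  have h0 := temperate_of_cb ha
  have h1 : (fderiv ℝ a).HasTemperateGrowth := by
    refine ⟨ha.1.fderiv_right (by simp), fun n => ⟨0, (ha.2 (n+1)).imp fun C hC x => ?_⟩⟩
    rw [norm_iteratedFDeriv_fderiv]
    simpa using hC x
  have h2 := ContinuousLinearMap.bilinear_hasTemperateGrowth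
    (ContinuousLinearMap.id ℝ (Ed d →L[ℝ] ℝ)) h1 (Function.HasTemperateGrowth.id (E := Ed d))
  exact ((Function.HasTemperateGrowth.const (2:ℝ)).mul h0).sub h2


lemma cb_bounds {d : ℕ} {a : Ed d → ℝ} (ha : CbSmooth d a) : ∃ C : ℝ, 0 ≤ C ∧
    (∀ x, |a x| ≤ C) ∧ (∀ x, |xdotOp d a x| ≤ C * ‖x‖) ∧ ∀ x y, |a y - a x| ≤ C * ‖y - x‖ := by
  obtain ⟨C0, h0⟩ := ha.2 0
  obtain ⟨C1, h1⟩ := ha.2 1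
  have h0' : ∀ x, |a x| ≤ C0 := fun x => by simpa using h0 x
  have h1' : ∀ x, ‖fderiv ℝ a x‖ ≤ C1 := fun x => by
    have := h1 x; rwa [norm_iteratedFDeriv_one] at this
  have p0 : 0 ≤ C0 := (abs_nonneg _).trans (h0' 0)
  have p1 : 0 ≤ C1 := (norm_nonneg _).trans (h1' 0)
  have h1'' : ∀ x, ‖fderiv ℝ a x‖ ≤ C0 + C1 := fun x => (h1' x).trans (by linarith)
  refine ⟨C0 + C1, by positivity, fun x => (h0' x).trans (by linarith), fun x => ?_, fun x y => ?_⟩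
  · exact ((fderiv ℝ a x).le_opNorm x).trans (by gcongr; exact h1'' x)
  · exact convex_univ.norm_image_sub_le_of_norm_fderiv_le (𝕜 := ℝ)
      (fun x _ => (ha.1.differentiable (by simp)) x) (fun x _ => h1'' x) (Set.mem_univ x)
      (Set.mem_univ y)

lemma integrand_continuous {d : ℕ} {b : Ed d → ℝ} (hb : Continuous b) {w : Ed d → ℂ}
    (hw : Continuous w) (T : ℝ) : Continuous (fun p : ℝ × Ed d =>
      ((Real.exp (2 * p.1 - T) * b (Real.exp (T - p.1) • p.2) : ℝ) : ℂ) * w p.2) := by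
  fun_prop

lemma integrable_prod_aux {d : ℕ} {b : Ed d → ℝ} (hb : Continuous b) {C : ℝ} (hC : 0 ≤ C)
    (hbC : ∀ x, |b x| ≤ C * (2 + ‖x‖)) {w : Ed d → ℂ} (hw : Continuous w)
    (hw0 : Integrable w) (hw1 : Integrable fun x => ‖x‖ * ‖w x‖) (T : ℝ) :
    Integrable (Function.uncurry fun (σ : ℝ) (y : Ed d) =>
      ((Real.exp (2 * σ - T) * b (Real.exp (T - σ) • y) : ℝ) : ℂ) * w y)
      ((volume.restrict (Set.uIoc 0 T)).prod volume) := by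
  have hB : Integrable (fun y : Ed d => Real.exp (3 * |T|) * C *
      (2 * ‖w y‖ + Real.exp (2 * |T|) * (‖y‖ * ‖w y‖))) :=
    ((hw0.norm.const_mul 2).add (hw1.const_mul _)).const_mul _
  have hB2 : Integrable (fun p : ℝ × Ed d => Real.exp (3 * |T|) * C *
      (2 * ‖w p.2‖ + Real.exp (2 * |T|) * (‖p.2‖ * ‖w p.2‖)))
      ((volume.restrict (Set.uIoc 0 T)).prod volume) := by
    haveI : IsFiniteMeasure ((volume : Measure ℝ).restrict (Set.uIoc 0 T)) := by
      unfold Set.uIoc; infer_instance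
    exact hB.comp_snd _
  refine hB2.mono' (integrand_continuous hb hw T).aestronglyMeasurable ?_
  have : ((volume : Measure ℝ).restrict (Set.uIoc 0 T)).prod (volume : Measure (Ed d)) =
      ((volume : Measure ℝ).prod (volume : Measure (Ed d))).restrict
        (Set.uIoc 0 T ×ˢ Set.univ) := by
    rw [← Measure.prod_restrict, Measure.restrict_univ]
  rw [this]
  refine ae_restrict_of_forall_mem (measurableSet_uIoc.prod MeasurableSet.univ) ?_
  rintro ⟨σ, y⟩ ⟨hσ, -⟩
  have hσ' : |σ| ≤ |T| := by
    have := Set.abs_sub_left_of_mem_uIcc (Set.uIoc_subset_uIcc hσ)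
    simpa using this
  have a1 := abs_le.1 hσ'
  have a2 := abs_le.1 (le_refl |T|)
  simp only [Function.uncurry, norm_mul, Complex.norm_real, Real.norm_eq_abs, abs_mul,
    Real.abs_exp]
  have e1 : Real.exp (2 * σ - T) ≤ Real.exp (3 * |T|) := Real.exp_le_exp.2 (by linarith)
  have e2 : Real.exp (T - σ) ≤ Real.exp (2 * |T|) := Real.exp_le_exp.2 (by linarith)
  have e3 : |b (Real.exp (T - σ) • y)| ≤ C * (2 + Real.exp (2 * |T|) * ‖y‖) := by
    refine (hbC _).trans ?_
    rw [norm_smul, Real.norm_eq_abs, Real.abs_exp]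
    gcongr
  calc Real.exp (2 * σ - T) * |b (Real.exp (T - σ) • y)| * ‖w y‖
      ≤ Real.exp (3 * |T|) * (C * (2 + Real.exp (2 * |T|) * ‖y‖)) * ‖w y‖ := by gcongr
    _ = _ := by ring

lemma duhamel_scalar {d : ℕ} {a : Ed d → ℝ} (ha : CbSmooth d a) {w : Ed d → ℂ}
    (hw : Continuous w)
    (hw0 : Integrable w) (hw1 : Integrable fun x => ‖x‖ * ‖w x‖) (T : ℝ) :
    IntervalIntegrable (fun σ : ℝ => ∫ y, ((Real.exp (2 * σ - T) *
      (2 * a (Real.exp (T - σ) • y) - xdotOp d a (Real.exp (T - σ) • y)) : ℝ) : ℂ) * w y)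
      volume 0 T ∧
    ∫ σ in (0:ℝ)..T, (∫ y, ((Real.exp (2 * σ - T) *
      (2 * a (Real.exp (T - σ) • y) - xdotOp d a (Real.exp (T - σ) • y)) : ℝ) : ℂ) * w y) =
    ∫ y, ((Real.exp T * a y - Real.exp (-T) * a (Real.exp T • y) : ℝ) : ℂ) * w y := by
  obtain ⟨C, hC, h0, h1, -⟩ := cb_bounds ha
  have hbc : Continuous (fun x => 2 * a x - xdotOp d a x) := (temperate_comm ha).1.continuous
  have hint := integrable_prod_aux hbc hC (fun x => by
    calc |2 * a x - xdotOp d a x| ≤ |2 * a x| + |xdotOp d a x| := abs_sub _ _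
      _ ≤ 2 * C + C * ‖x‖ := by
        rw [abs_mul, abs_two]; linarith [h0 x, h1 x]
      _ = _ := by ring) hw hw0 hw1 T
  refine ⟨?_, ?_⟩
  · rw [intervalIntegrable_iff]
    exact hint.integral_prod_left
  · rw [intervalIntegral_integral_swap hint]
    congr 1
    funext y
    rw [intervalIntegral.integral_mul_const]
    congr 1
    have hd : ∀ σ : ℝ, HasDerivAt (fun σ : ℝ => Real.exp (2 * σ - T) * a (Real.exp (T - σ) • y))
        (Real.exp (2 * σ - T) *
      (2 * a (Real.exp (T - σ) • y) - xdotOp d a (Real.exp (T - σ) • y))) σ := by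
      intro σ
      have d1 : HasDerivAt (fun σ : ℝ => Real.exp (2 * σ - T)) (Real.exp (2 * σ - T) * 2) σ := by
        have : HasDerivAt (fun σ : ℝ => 2 * σ - T) 2 σ := by
          simpa using ((hasDerivAt_id σ).const_mul 2).sub_const T
        exact this.exp
      have d2 : HasDerivAt (fun σ : ℝ => Real.exp (T - σ) • y) ((Real.exp (T - σ) * (-1)) • y) σ := by
        have : HasDerivAt (fun σ : ℝ => T - σ) (-1) σ := by
          simpa using (hasDerivAt_id σ).const_sub T
        exact this.exp.smul_const y
      have d3 := ((ha.1.differentiable (by simp)) (Real.exp (T - σ) • y)).hasFDerivAt.comp_hasDerivAt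
        σ d2
      refine (d1.mul d3).congr_deriv ?_
      simp [xdotOp]
      ring
    have hcont : Continuous (fun σ : ℝ => Real.exp (2 * σ - T) *
      (2 * a (Real.exp (T - σ) • y) - xdotOp d a (Real.exp (T - σ) • y))) := by
      have : Continuous (fun σ : ℝ => (fun x => 2 * a x - xdotOp d a x) (Real.exp (T - σ) • y)) :=
        hbc.comp (by fun_prop)
      exact Continuous.mul (by fun_prop) this
    rw [intervalIntegral.integral_ofReal, intervalIntegral.integral_eq_sub_of_hasDerivAt
      (fun σ _ => hd σ) (hcont.intervalIntegrable _ _)]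
    congr 2
    · congr 1
      · congr 1; ring
      · simp
    · simp

lemma exp_bound (T : ℝ) : |Real.exp T - 1| ≤ |T| * Real.exp |T| := by
  have h1 := Real.add_one_le_exp T
  have h2 := Real.add_one_le_exp (-T)
  have h3 := Real.exp_pos T
  have h4 : Real.exp T * Real.exp (-T) = 1 := by rw [← Real.exp_add]; simp
  have h5 : 1 ≤ Real.exp |T| := Real.one_le_exp (abs_nonneg _)
  rcases le_total 0 T with hT | hT
  · rw [abs_of_nonneg hT, abs_of_nonneg (by linarith)]
    nlinarith
  · rw [abs_of_nonpos hT] at *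
    rw [abs_of_nonpos (by linarith [Real.exp_le_one_iff.2 hT])]
    nlinarith

lemma coef_bound {d : ℕ} {a : Ed d → ℝ} {C : ℝ} (hC : 0 ≤ C) (h0 : ∀ x, |a x| ≤ C)
    (h2 : ∀ x y, |a y - a x| ≤ C * ‖y - x‖) (T : ℝ) (y : Ed d) :
    |Real.exp T * a y - Real.exp (-T) * a (Real.exp T • y)| ≤
      |T| * Real.exp |T| * (2 * C * (1 + ‖y‖)) := by
  have e1 := exp_bound T
  have e2 := exp_bound (-T)
  rw [abs_neg] at e2
  have k : Real.exp (-T) * Real.exp T = 1 := by rw [← Real.exp_add]; simp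
  have e3 : |Real.exp (-T) * (a y - a (Real.exp T • y))| ≤ |T| * Real.exp |T| * (C * ‖y‖) := by
    rw [abs_mul, Real.abs_exp]
    have : y - Real.exp T • y = (1 - Real.exp T) • y := by rw [sub_smul, one_smul]
    calc Real.exp (-T) * |a y - a (Real.exp T • y)|
        ≤ Real.exp (-T) * (C * ‖y - Real.exp T • y‖) := by gcongr; exact h2 _ _
      _ = |Real.exp (-T) - 1| * (C * ‖y‖) := by
        rw [this, norm_smul, Real.norm_eq_abs]
        have : Real.exp (-T) - 1 = Real.exp (-T) * (1 - Real.exp T) := by linear_combination k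
        rw [this, abs_mul, Real.abs_exp]; ring
      _ ≤ _ := by gcongr
  have e4 : |(Real.exp T - Real.exp (-T)) * a y| ≤ (2 * (|T| * Real.exp |T|)) * C := by
    rw [abs_mul]
    have : |Real.exp T - Real.exp (-T)| ≤ 2 * (|T| * Real.exp |T|) := by
      have := abs_sub_le (Real.exp T) 1 (Real.exp (-T))
      rw [abs_sub_comm 1] at this
      linarith
    gcongr
    exact h0 y
  have : Real.exp T * a y - Real.exp (-T) * a (Real.exp T • y) =
    (Real.exp T - Real.exp (-T)) * a y + Real.exp (-T) * (a y - a (Real.exp T • y)) := by ring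
  rw [this]
  refine (abs_add_le _ _).trans ((add_le_add e4 e3).trans ?_)
  have : 0 ≤ |T| * Real.exp |T| * (C * ‖y‖) := by positivity
  linarith

lemma sq_dilS {d : ℕ} (T : ℝ) (f : SchwartzMap (Ed d) ℂ) :
    ∫ y, ‖dilS T f y‖ ^ 2 = ∫ y, ‖f y‖ ^ 2 := by
  have h := pair_dil d T (⇑f) (⇑(dilS T f))
  rw [coe_dilS, dil_dil, neg_add_cancel, dil_zero, ← coe_dilS] at h
  unfold pairL2 at h
  simp only [Complex.conj_mul'] at h
  have h' : ∫ y, ((‖dilS T f y‖ ^ 2 : ℝ) : ℂ) = ∫ y, ((‖f y‖ ^ 2 : ℝ) : ℂ) := by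
    simpa using h
  rw [integral_complex_ofReal, integral_complex_ofReal] at h'
  exact_mod_cast h'

lemma sq_integrable {d : ℕ} (f : SchwartzMap (Ed d) ℂ) : Integrable fun y => ‖f y‖ ^ 2 := by
  refine (conjMul_integrable f f).norm.congr (Eventually.of_forall fun x => ?_)
  simp [pow_two]

lemma wsq_integrable {d : ℕ} (g : SchwartzMap (Ed d) ℂ) :
    Integrable fun y => ((1 + ‖y‖) * ‖g y‖) ^ 2 := by
  obtain ⟨C, hC⟩ : ∃ C, ∀ y, ‖g y‖ ≤ C := ⟨_, fun y => g.norm_le_seminorm ℝ y⟩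
  have h0 := (g.integrable_pow_mul volume 0)
  have h1 := (g.integrable_pow_mul volume 1)
  have h2 := (g.integrable_pow_mul volume 2)
  refine (((h0.add (h1.const_mul 2)).add h2).const_mul C).mono'
    (Continuous.aestronglyMeasurable (by fun_prop)) (Eventually.of_forall fun y => ?_)
  rw [Real.norm_eq_abs, abs_of_nonneg (by positivity)]
  have := hC y
  simp only [Pi.add_apply, pow_zero, pow_one]
  calc ((1 + ‖y‖) * ‖g y‖) ^ 2 = ((1 + ‖y‖) ^ 2 * ‖g y‖) * ‖g y‖ := by ring
    _ ≤ ((1 + ‖y‖) ^ 2 * ‖g y‖) * C := by gcongr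
    _ = _ := by ring

lemma bound_scalar {d : ℕ} {a : Ed d → ℝ} (ha : CbSmooth d a) (f g : SchwartzMap (Ed d) ℂ) :
    ∃ K : ℝ, ∀ T : ℝ,
    ‖∫ y, ((Real.exp T * a y - Real.exp (-T) * a (Real.exp T • y) : ℝ) : ℂ) *
      ((starRingEnd ℂ) (dilS T f y) * g y)‖ ≤ K * (|T| * Real.exp |T|) := by
  obtain ⟨C, hC, h0, -, h2⟩ := cb_bounds ha
  refine ⟨C * ((∫ y, ‖f y‖ ^ 2) + ∫ y, ((1 + ‖y‖) * ‖g y‖) ^ 2), fun T => ?_⟩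
  have hI := (((sq_integrable (dilS T f)).add (wsq_integrable g)).const_mul
    (|T| * Real.exp |T| * C))
  refine (norm_integral_le_of_norm_le hI (Eventually.of_forall fun y => ?_)).trans (le_of_eq ?_)
  · simp only [norm_mul, Complex.norm_real, Real.norm_eq_abs, RCLike.norm_conj, Pi.add_apply]
    have hc := coef_bound hC h0 h2 T y
    calc _ ≤ |T| * Real.exp |T| * (2 * C * (1 + ‖y‖)) * (‖dilS T f y‖ * ‖g y‖) := by gcongr
      _ = |T| * Real.exp |T| * C * (2 * ‖dilS T f y‖ * ((1 + ‖y‖) * ‖g y‖)) := by ring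
      _ ≤ _ := by gcongr; exact two_mul_le_add_sq _ _
  · simp only [Pi.add_apply]
    rw [integral_const_mul, integral_add (sq_integrable _) (wsq_integrable _), sq_dilS]
    ring

/-- The weight `conj (e^{iTA} ∂_k u₁) ∂_j u₂`. -/
def wgt {d : ℕ} (u₁ u₂ : SchwartzMap (Ed d) ℂ) (T : ℝ) (j k : Fin d) (y : Ed d) : ℂ :=
  (starRingEnd ℂ)
    (dilS T (∂_{(EuclideanSpace.single k (1:ℝ) : Ed d)} u₁ : SchwartzMap (Ed d) ℂ) y) *
    (∂_{(EuclideanSpace.single j (1:ℝ) : Ed d)} u₂ : SchwartzMap (Ed d) ℂ) y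

lemma wgt_props {d : ℕ} (u₁ u₂ : SchwartzMap (Ed d) ℂ) (T : ℝ) (j k : Fin d) :
    Continuous (wgt u₁ u₂ T j k) ∧ Integrable (wgt u₁ u₂ T j k) ∧
      Integrable (fun x => ‖x‖ * ‖wgt u₁ u₂ T j k x‖) := by
  obtain ⟨s, hs⟩ : ∃ s : SchwartzMap (Ed d) ℂ, ⇑s = wgt u₁ u₂ T j k :=
    ⟨SchwartzMap.bilinLeftCLM conjMul
      (∂_{(EuclideanSpace.single j (1:ℝ) : Ed d)} u₂ : SchwartzMap (Ed d) ℂ).hasTemperateGrowth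
      (dilS T (∂_{(EuclideanSpace.single k (1:ℝ) : Ed d)} u₁ : SchwartzMap (Ed d) ℂ)), by
      funext x
      simp [SchwartzMap.bilinLeftCLM_apply, conjMul_apply, wgt]⟩
  rw [← hs]
  exact ⟨s.continuous, s.integrable, by simpa using s.integrable_pow_mul volume 1⟩

lemma lhs_eq {d : ℕ} {G : Ed d → Fin d → Fin d → ℝ} (hG : Standing d G)
    (u₁ u₂ : SchwartzMap (Ed d) ℂ) (T : ℝ) :
    pairL2 d (dil d T ⇑u₁) (divGrad d G ⇑u₂) - pairL2 d (divGrad d G ⇑u₁) (dil d (-T) ⇑u₂) =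
    ∑ j : Fin d, ∑ k : Fin d, ∫ y, ((Real.exp T * G y j k -
      Real.exp (-T) * G (Real.exp T • y) j k : ℝ) : ℂ) * wgt u₁ u₂ T j k y := by
  have hb : ∀ j k, (fun x => G x j k).HasTemperateGrowth := fun j k => temperate_of_cb (hG.1 j k)
  have e1 : pairL2 d (dil d T ⇑u₁) (divGrad d G ⇑u₂) =
      pairL2 d (divGrad d G (dil d T u₁)) (dil d (T - T) u₂) := by
    rw [sub_self, dil_zero, ← coe_dilS, pair_symm hb hG.2.1]
  have e2 : pairL2 d (divGrad d G ⇑u₁) (dil d (-T) ⇑u₂) =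
      pairL2 d (divGrad d G (dil d 0 u₁)) (dil d (0 - T) u₂) := by
    rw [dil_zero, zero_sub]
  rw [e1, e2, form_eq hb, form_eq hb, ← Finset.sum_sub_distrib]
  refine Finset.sum_congr rfl fun j _ => ?_
  rw [← Finset.sum_sub_distrib]
  refine Finset.sum_congr rfl fun k _ => ?_
  obtain ⟨C, hC, h0, -, -⟩ := cb_bounds (hG.1 j k)
  obtain ⟨-, hw, -⟩ := wgt_props u₁ u₂ T j k
  have hGc : Continuous (fun x => G x j k) := (hb j k).1.continuous
  have hint : ∀ r s : ℝ, Integrable (fun y => ((Real.exp r * G (Real.exp s • y) j k : ℝ) : ℂ) *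
      wgt u₁ u₂ T j k y) := fun r s => by
    have hc : Continuous (fun y : Ed d => G (Real.exp s • y) j k) := hGc.comp (by fun_prop)
    refine hw.bdd_mul (c := Real.exp r * C)
      (Continuous.aestronglyMeasurable (by fun_prop)) (Eventually.of_forall fun y => ?_)
    rw [Complex.norm_real, Real.norm_eq_abs, abs_mul, Real.abs_exp]
    gcongr
    exact h0 _
  refine (integral_sub (hint _ _) (hint _ _)).symm.trans ?_
  congr 1
  funext y
  have k1 : 2 * T - T = T := by ring
  rw [k1, mul_zero, zero_sub, sub_zero, sub_self, Real.exp_zero, one_smul]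
  push_cast
  ring

lemma rhs_eq {d : ℕ} {G : Ed d → Fin d → Fin d → ℝ} (hG : Standing d G)
    (u₁ u₂ : SchwartzMap (Ed d) ℂ) (T σ : ℝ) :
    pairL2 d (dil d T (ptauFun d G σ ⇑u₁)) ⇑u₂ =
    ∑ j : Fin d, ∑ k : Fin d, ∫ y, ((Real.exp (2 * σ - T) *
      (2 * G (Real.exp (T - σ) • y) j k -
        xdotOp d (fun x => G x j k) (Real.exp (T - σ) • y)) : ℝ) : ℂ) * wgt u₁ u₂ T j k y := by
  have hb : ∀ j k, (fun x => commCoef d G x j k).HasTemperateGrowth :=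
    fun j k => temperate_comm (hG.1 j k)
  unfold ptauFun
  rw [dil_dil, pair_dil]
  have k1 : -(T + -σ) = σ - T := by ring
  rw [k1, form_eq hb]
  rfl

end Helpers

/-- **Lemma (Duhamel formula for the dilated commutator).** For all `t ∈ ℝ`, `h > 0`
and `u₁, u₂ ∈ 𝒮(ℝ^d)`:
`(e^{ithA}u₁, Pu₂) - (Pu₁, e^{-ithA}u₂) = h ∫₀^t (e^{ithA} P_{sh} u₁, u₂) ds`, and for
each pair `u₁, u₂` there is `C` with
`|(e^{ithA}u₁, Pu₂) - (Pu₁, e^{-ithA}u₂)| ≤ C |t| e^{h|t|}` for all `t ∈ ℝ`. -/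
theorem statement10 (d : ℕ) (G : Ed d → Fin d → Fin d → ℝ) (hG : Standing d G)
    (h : ℝ) (hh : 0 < h) (u₁ u₂ : SchwartzMap (Ed d) ℂ) :
    (∀ t : ℝ,
      pairL2 d (dil d (t * h) ⇑u₁) (divGrad d G ⇑u₂)
          - pairL2 d (divGrad d G ⇑u₁) (dil d (-(t * h)) ⇑u₂)
        = (h : ℂ) * ∫ s in (0:ℝ)..t, pairL2 d (dil d (t * h) (ptauFun d G (s * h) ⇑u₁)) ⇑u₂) ∧
    ∃ C : ℝ, ∀ t : ℝ,
      ‖pairL2 d (dil d (t * h) ⇑u₁) (divGrad d G ⇑u₂)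
          - pairL2 d (divGrad d G ⇑u₁) (dil d (-(t * h)) ⇑u₂)‖
        ≤ C * |t| * Real.exp (h * |t|) := by
  refine ⟨fun t => ?_, ?_⟩
  · rw [lhs_eq hG]
    have e := intervalIntegral.smul_integral_comp_mul_right (a := 0) (b := t)
      (fun σ : ℝ => pairL2 d (dil d (t * h) (ptauFun d G σ ⇑u₁)) ⇑u₂) h
    rw [Complex.real_smul, zero_mul] at e
    rw [e]
    simp only [rhs_eq hG]
    have key := fun j k : Fin d => duhamel_scalar (hG.1 j k) (wgt_props u₁ u₂ (t * h) j k).1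
      (wgt_props u₁ u₂ (t * h) j k).2.1 (wgt_props u₁ u₂ (t * h) j k).2.2 (t * h)
    rw [intervalIntegral.integral_finsetSum (fun j _ => by
      have q := IntervalIntegrable.sum Finset.univ (fun k _ => (key j k).1)
      simp only [Finset.sum_fn] at q
      exact q)]
    refine Finset.sum_congr rfl fun j _ => ?_
    rw [intervalIntegral.integral_finsetSum (fun k _ => (key j k).1)]
    exact Finset.sum_congr rfl fun k _ => (key j k).2.symm
  · choose K hK using fun j k : Fin d => bound_scalar (hG.1 j k)
      (LineDeriv.lineDerivOp (EuclideanSpace.single k (1:ℝ) : Ed d) u₁ : SchwartzMap (Ed d) ℂ)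
      (LineDeriv.lineDerivOp (EuclideanSpace.single j (1:ℝ) : Ed d) u₂ : SchwartzMap (Ed d) ℂ)
    refine ⟨(∑ j, ∑ k, K j k) * h, fun t => ?_⟩
    rw [lhs_eq hG]
    have hT : |t * h| = h * |t| := by rw [abs_mul, abs_of_pos hh, mul_comm]
    calc _ ≤ ∑ j, ∑ k, K j k * (|t * h| * Real.exp |t * h|) :=
          norm_sum_le_of_le _ fun j _ => norm_sum_le_of_le _ fun k _ => hK j k (t * h)
      _ = _ := by
        simp only [← Finset.sum_mul]
        rw [hT]
        ring
end
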